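/- For each ε > 0 there is C > 0 with the following property. Let s ∈ ℕ, β ∈ [1/2, 1], suppose that for each q with 2^s ≤ q < 2^{s+1} one is given a quadratic Dirichlet character χ_q modulo q, and let S be any subset of 𝓡_s. Then for every finitely supported f : ℤ → ℂ, ‖ sup_{n ≥ 2^{s+4}} | Σ_{a/q ∈ S} G(χ_q, a) ℱ⁻¹( M̂_{2^n}^β(· − a/q) η_s(· − a/q) f̂ ) | ‖_{ℓ²(ℤ)} ≤ C 2^{−s(1/2−ε)} ‖f‖_{ℓ²(ℤ)}, where C is independent of s, β, S and the characters χ_q. -/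

import Mathlib

open scoped BigOperators

/-- `η` is smooth, `0 ≤ η ≤ 1`, `η = 1` on `[−1/4, 1/4]`, `η = 0` off `(−1/2, 1/2)`,
and `η` is a convolution of two smooth functions supported in `(−1/2, 1/2)`. -/
def IsEta (η : ℝ → ℝ) : Prop :=
  ContDiff ℝ (⊤ : ℕ∞) η ∧ (∀ ξ, 0 ≤ η ξ ∧ η ξ ≤ 1) ∧ (∀ ξ : ℝ, |ξ| ≤ 1 / 4 → η ξ = 1) ∧
    (∀ ξ : ℝ, 1 / 2 ≤ |ξ| → η ξ = 0) ∧
    ∃ g₁ g₂ : ℝ → ℝ, ContDiff ℝ (⊤ : ℕ∞) g₁ ∧ ContDiff ℝ (⊤ : ℕ∞) g₂ ∧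
      (∀ x : ℝ, x ∉ Set.Ioo (-(1 / 2) : ℝ) (1 / 2) → g₁ x = 0) ∧
      (∀ x : ℝ, x ∉ Set.Ioo (-(1 / 2) : ℝ) (1 / 2) → g₂ x = 0) ∧
      ∀ x : ℝ, η x = ∫ y : ℝ, g₁ y * g₂ (x - y)

/-- `η_s(ξ) = η(2^{4s} ξ)`, regarded as a 1-periodic function (periodization). -/
noncomputable def etaPer (η : ℝ → ℝ) (s : ℕ) (ξ : ℝ) : ℝ :=
  ∑' k : ℤ, η (2 ^ (4 * s) * (ξ - k))

/-- The Fourier transform `f̂(ξ) = Σ_{n ∈ ℤ} f(n) e^{−2πi ξ n}`. -/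
noncomputable def fhat (f : ℤ → ℂ) (ξ : ℝ) : ℂ :=
  ∑' n : ℤ, f n * Complex.exp (-(2 * Real.pi * Complex.I * ξ * n))

/-- The inverse Fourier transform `ℱ⁻¹g(x) = ∫₀¹ g(ξ) e^{2πi ξ x} dξ`, `x ∈ ℤ`. -/
noncomputable def FinvInt (g : ℝ → ℂ) (x : ℤ) : ℂ :=
  ∫ ξ in (0 : ℝ)..1, g ξ * Complex.exp (2 * Real.pi * Complex.I * ξ * x)

/-- The multiplier `M̂_N^β(ξ) = (1/N) Σ_{n=1}^N ((n^β − (n−1)^β)/β) e^{2πi ξ n}`. -/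
noncomputable def Mhat (β : ℝ) (N : ℕ) (ξ : ℝ) : ℂ :=
  ((N : ℂ))⁻¹ * ∑ n ∈ Finset.Icc 1 N,
    (((((n : ℝ) ^ β - ((n : ℝ) - 1) ^ β) / β) : ℝ) : ℂ) *
      Complex.exp (2 * Real.pi * Complex.I * ξ * n)

/-- `A_q = {1 ≤ a ≤ q : gcd(a, q) = 1}`. -/
def Aq (q : ℕ) : Finset ℕ := (Finset.Icc 1 q).filter (fun a => Nat.Coprime a q)

/-- The normalized Gauss sum `G(χ, n) = (1/φ(q)) Σ_{r ∈ A_q} χ(r) e^{2πi r n/q}`. -/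
noncomputable def gaussG (q : ℕ) (χ : DirichletCharacter ℂ q) (n : ℤ) : ℂ :=
  ((q.totient : ℂ))⁻¹ *
    ∑ r ∈ Aq q, χ (r : ZMod q) * Complex.exp (2 * Real.pi * Complex.I * r * n / q)

/-- The fractions `a/q ∈ 𝓡_s`, encoded as pairs `(a, q)` with `a ∈ A_q`,
`2^s ≤ q < 2^{s+1}`, and `q` square-free or `4 ∣ q` with `q/4` square-free. -/
def Rset (s : ℕ) : Finset (ℕ × ℕ) :=
  (Finset.range (2 ^ (s + 1)) ×ˢ Finset.range (2 ^ (s + 1))).filter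
    (fun p => 2 ^ s ≤ p.2 ∧ 1 ≤ p.1 ∧ p.1 ≤ p.2 ∧ Nat.Coprime p.1 p.2 ∧
      (Squarefree p.2 ∨ (4 ∣ p.2 ∧ Squarefree (p.2 / 4))))

/-! The cutoffs `η_s(· − a/q)`, `a/q ∈ 𝓡_s`, have disjoint supports, so by Plancherel the pieces
`f_{a/q} = ℱ⁻¹(η_s(· − a/q) f̂)` satisfy `Σ ‖f_{a/q}‖² ≤ ‖f‖²`. The multiplier `M̂_N^β(· − a/q)`
averages `f_{a/q}`, modulated by the frequency `a/q`, over the next `N` points with weights at most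
`1/β`. All fractions in `𝓡_s` have the common denominator `Q = 4 ∏_{p ≤ 2^{s+1}} p ≤ 2^{2^{s+4}}`.
Hence the dependence of the modulations on the base point `x` is through `x` modulo `Q` only, and
distinct modulations are orthogonal over a period. At scales `N ≥ Q` this residue may be frozen at
the cost of a constant, and the Hardy–Littlewood maximal inequality, applied for each residue and
averaged over the residues, gives an `ℓ²` bound with no loss in the number of frequencies. Finally
every Gauss sum is at most `(s + 1) 2^{−s/2}`, and the factor `s + 1` is absorbed into `2^{εs}`. -/

open Finset

section HardyLittlewood

variable (H : ℕ → ℝ)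

/-- The largest sum of `H - l` over a possibly empty block of consecutive indices ending just
before `k`, in the form of the recursion that it satisfies. -/
noncomputable def blockExcess (l : ℝ) : ℕ → ℝ
  | 0 => 0
  | k + 1 => max 0 (H k - l + blockExcess l k)

/-- The largest average of `H` over a block of consecutive indices ending at `k`. -/
noncomputable def maxBackwardAvg (k : ℕ) : ℝ :=
  (range (k + 1)).sup' nonempty_range_add_one fun J ↦ (∑ j ∈ range (J + 1), H (k - j)) / (J + 1 : ℕ)

lemma blockExcess_nonneg (l : ℝ) : ∀ k, 0 ≤ blockExcess H l k
  | 0 => le_rfl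
  | _ + 1 => le_max_left _ _

lemma le_add_blockExcess_iff (l c : ℝ) (k : ℕ) :
    c ≤ H k - l + blockExcess H l k ↔ ∃ J ≤ k, c ≤ ∑ j ∈ range (J + 1), (H (k - j) - l) := by
  induction k generalizing c with
  | zero => simp [blockExcess]
  | succ k ih =>
    have step (J : ℕ) : ∑ j ∈ range (J + 1 + 1), (H (k + 1 - j) - l) =
        ∑ j ∈ range (J + 1), (H (k - j) - l) + (H (k + 1) - l) := by
      rw [sum_range_succ']
      simp
    rw [blockExcess, ← sub_le_iff_le_add', le_max_iff, ih]
    constructor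
    · rintro (h | ⟨J, hJ, h⟩)
      · exact ⟨0, by lia, by simpa using h⟩
      · exact ⟨J + 1, by lia, by rw [step]; linarith⟩
    · rintro ⟨_ | J, hJ, h⟩
      · exact Or.inl (by simpa using h)
      · exact Or.inr ⟨J, by lia, by rw [step] at h; linarith⟩

lemma le_maxBackwardAvg_iff (l : ℝ) (k : ℕ) :
    l ≤ maxBackwardAvg H k ↔ 0 ≤ H k - l + blockExcess H l k := by
  simp only [maxBackwardAvg, le_sup'_iff, le_add_blockExcess_iff, mem_range, Order.lt_add_one_iff]
  refine exists_congr fun J ↦ and_congr_right fun _ ↦ ?_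
  rw [le_div_iff₀ (by positivity), sum_sub_distrib, sum_const, card_range, nsmul_eq_mul, sub_nonneg,
    mul_comm]

lemma backwardAvg_le_maxBackwardAvg {J k : ℕ} (hJ : 0 < J) (hJk : J ≤ k + 1) :
    (∑ j ∈ range J, H (k - j)) / J ≤ maxBackwardAvg H k := by
  obtain ⟨J, rfl⟩ := Nat.exists_eq_succ_of_ne_zero hJ.ne'
  exact le_sup' (fun J ↦ (∑ j ∈ range (J + 1), H (k - j)) / (J + 1 : ℕ))
    (mem_range.2 (by lia))

lemma le_maxBackwardAvg (k : ℕ) : H k ≤ maxBackwardAvg H k := by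
  simpa using backwardAvg_le_maxBackwardAvg H one_pos (Nat.le_add_left 1 k)

/-- The rising sun lemma: `blockExcess` starts at `0`, stays nonnegative, and increases by at most
the summand at each step. -/
lemma sum_indicator_maxBackwardAvg_nonneg (l : ℝ) (L : ℕ) :
    0 ≤ ∑ k ∈ range L, {l | l ≤ maxBackwardAvg H k}.indicator (fun l ↦ H k - l) l := by
  suffices blockExcess H l L ≤
      ∑ k ∈ range L, {l | l ≤ maxBackwardAvg H k}.indicator (fun l ↦ H k - l) l from
    (blockExcess_nonneg H l L).trans this
  induction L with
  | zero => simp [blockExcess]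
  | succ L ih =>
    have hP := blockExcess_nonneg H l L
    rw [sum_range_succ, blockExcess]
    by_cases hl : l ≤ maxBackwardAvg H L
    · have hl' := (le_maxBackwardAvg_iff H l L).1 hl
      rw [Set.indicator_of_mem (show l ∈ {l | l ≤ maxBackwardAvg H L} from hl), max_eq_right hl']
      linarith
    · have hl' := mt (le_maxBackwardAvg_iff H l L).2 hl
      rw [Set.indicator_of_notMem (show l ∉ {l | l ≤ maxBackwardAvg H L} from hl),
        max_eq_left (not_le.1 hl').le]
      linarith

end HardyLittlewood

lemma integral_indicator_sub {M B : ℝ} (hM : 0 ≤ M) (hMB : M ≤ B) (h : ℝ) :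
    ∫ l in (0 : ℝ)..B, {l | l ≤ M}.indicator (fun l ↦ h - l) l = h * M - M ^ 2 / 2 := by
  rw [intervalIntegral.integral_indicator ⟨hM, hMB⟩, intervalIntegral.integral_sub (by simp)
    (by simp), intervalIntegral.integral_const, integral_id]
  simp
  ring

lemma intervalIntegrable_indicator_sub (M B h : ℝ) :
    IntervalIntegrable ({l | l ≤ M}.indicator fun l ↦ h - l) MeasureTheory.volume 0 B := by
  rw [intervalIntegrable_iff]
  have integrable : IntervalIntegrable (fun l ↦ h - l) MeasureTheory.volume 0 B :=
    (continuous_const.sub continuous_id).intervalIntegrable 0 B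
  exact (intervalIntegrable_iff.1 integrable).indicator measurableSet_Iic

theorem sum_sq_maxBackwardAvg_le {H : ℕ → ℝ} (hH : ∀ k, 0 ≤ H k) (L : ℕ) :
    ∑ k ∈ range L, maxBackwardAvg H k ^ 2 ≤ 4 * ∑ k ∈ range L, H k ^ 2 := by
  have hM (k : ℕ) : 0 ≤ maxBackwardAvg H k := (hH k).trans (le_maxBackwardAvg H k)
  obtain ⟨B, hB⟩ := ((range L).image (maxBackwardAvg H)).exists_le
  rw [forall_mem_image] at hB
  have layer_cake : 0 ≤ ∑ k ∈ range L, (H k * maxBackwardAvg H k - maxBackwardAvg H k ^ 2 / 2) := by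
    rcases L.eq_zero_or_pos with rfl | hL
    · simp
    have hB0 : 0 ≤ B := (hM 0).trans (hB (mem_range.2 hL))
    rw [sum_congr rfl fun k hk ↦ (integral_indicator_sub (hM k) (hB hk) (H k)).symm,
      ← intervalIntegral.integral_finsetSum fun k _ ↦ intervalIntegrable_indicator_sub ..]
    exact intervalIntegral.integral_nonneg hB0 fun l _ ↦ sum_indicator_maxBackwardAvg_nonneg H l L
  have young : ∑ k ∈ range L, (H k * maxBackwardAvg H k - maxBackwardAvg H k ^ 2 / 2) ≤
      ∑ k ∈ range L, (H k ^ 2 - maxBackwardAvg H k ^ 2 / 4) :=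
    sum_le_sum fun k _ ↦ by linarith [sq_nonneg (H k - maxBackwardAvg H k / 2)]
  simp only [sum_sub_distrib, ← sum_div] at layer_cake young
  linarith

/-- The average of `v` over the `N` integers starting at `x`; it is `0` for `N = 0`. -/
noncomputable def forwardAvg (v : ℤ → ℝ) (N : ℕ) (x : ℤ) : ℝ :=
  (∑ m ∈ range N, v (x + m)) / N

lemma forwardAvg_nonneg {v : ℤ → ℝ} (hv : ∀ x, 0 ≤ v x) (N : ℕ) (x : ℤ) :
    0 ≤ forwardAvg v N x :=
  div_nonneg (sum_nonneg fun _ _ ↦ hv _) (Nat.cast_nonneg N)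

lemma forwardAvg_le_maxBackwardAvg {G : ℤ → ℝ} (hG : ∀ x, 0 ≤ G x) {R y : ℤ} {k N : ℕ}
    (hk : (k : ℤ) = R - y) (hN : N ≤ k + 1) :
    forwardAvg G N y ≤ maxBackwardAvg (fun j ↦ G (R - j)) k := by
  rcases N.eq_zero_or_pos with rfl | hN0
  · simpa [forwardAvg] using (hG _).trans (le_maxBackwardAvg (fun j ↦ G (R - j)) k)
  refine le_of_eq_of_le ?_ (backwardAvg_le_maxBackwardAvg _ hN0 hN)
  rw [forwardAvg]
  congr 1
  refine sum_congr rfl fun m hm ↦ congrArg G ?_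
  have := mem_range.1 hm
  rw [Nat.cast_sub (by lia), hk]
  ring

theorem sum_sq_forwardAvg_le {G : ℤ → ℝ} (hG : ∀ x, 0 ≤ G x) (hs : Summable fun x ↦ G x ^ 2)
    (J : ℤ → ℕ) (F : Finset ℤ) :
    ∑ y ∈ F, forwardAvg G (J y) y ^ 2 ≤ 4 * ∑' x, G x ^ 2 := by
  obtain ⟨R, hR⟩ := (F.image fun y ↦ y + J y).exists_le
  rw [forall_mem_image] at hR
  set H : ℕ → ℝ := fun k ↦ G (R - k)
  set i : ℤ → ℕ := fun y ↦ (R - y).toNat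
  have i_cast {y : ℤ} (hy : y ∈ F) : (i y : ℤ) = R - y :=
    Int.toNat_of_nonneg (by linarith [hR hy, Int.natCast_nonneg (J y)])
  have i_inj : Set.InjOn i F := fun y hy z hz hyz ↦ by
    have := congrArg (Nat.cast : ℕ → ℤ) hyz
    rw [i_cast hy, i_cast hz] at this
    linarith
  obtain ⟨L, hL⟩ := (F.image i).exists_nat_subset_range
  have avg_le : ∀ y ∈ F, forwardAvg G (J y) y ^ 2 ≤ maxBackwardAvg H (i y) ^ 2 := fun y hy ↦ by
    gcongr
    · exact forwardAvg_nonneg hG _ _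
    · exact forwardAvg_le_maxBackwardAvg hG (i_cast hy) (by have := i_cast hy; have := hR hy; lia)
  calc ∑ y ∈ F, forwardAvg G (J y) y ^ 2
      ≤ ∑ y ∈ F, maxBackwardAvg H (i y) ^ 2 := sum_le_sum avg_le
    _ = ∑ k ∈ F.image i, maxBackwardAvg H k ^ 2 :=
      (sum_image (f := fun k ↦ maxBackwardAvg H k ^ 2) i_inj).symm
    _ ≤ ∑ k ∈ range L, maxBackwardAvg H k ^ 2 :=
      sum_le_sum_of_subset_of_nonneg hL fun _ _ _ ↦ sq_nonneg _
    _ ≤ 4 * ∑ k ∈ range L, H k ^ 2 := sum_sq_maxBackwardAvg_le (fun _ ↦ hG _) L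
    _ ≤ 4 * ∑' x, G x ^ 2 := by
      gcongr
      have inj : Function.Injective fun k : ℕ ↦ R - (k : ℤ) := fun a b h ↦ by simpa using h
      exact (hs.comp_injective inj).sum_le_tsum _ (fun _ _ ↦ sq_nonneg _) |>.trans
        (tsum_comp_le_tsum_of_inj hs (fun _ ↦ sq_nonneg _) inj)

lemma forwardAvg_le_two_mul {v : ℤ → ℝ} (hv : ∀ x, 0 ≤ v x) {N M : ℕ} (hNM : N ≤ M)
    (hMN : M ≤ 2 * N) (x : ℤ) : forwardAvg v N x ≤ 2 * forwardAvg v M x := by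
  rcases N.eq_zero_or_pos with rfl | hN
  · obtain rfl : M = 0 := by lia
    simp [forwardAvg]
  have hMN' : (M : ℝ) ≤ 2 * N := mod_cast hMN
  have hN' : (0 : ℝ) < N := mod_cast hN
  have hM' : (0 : ℝ) < M := mod_cast hN.trans_le hNM
  have hsum : ∑ m ∈ range N, v (x + m) ≤ ∑ m ∈ range M, v (x + m) :=
    sum_le_sum_of_subset_of_nonneg (range_mono hNM) fun _ _ _ ↦ hv _
  have hsum0 : 0 ≤ ∑ m ∈ range M, v (x + m) := sum_nonneg fun _ _ ↦ hv _
  rw [forwardAvg, forwardAvg, ← mul_div_assoc, div_le_div_iff₀ hN' hM']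
  nlinarith

lemma sq_forwardAvg_le (v : ℤ → ℝ) (N : ℕ) (x : ℤ) :
    forwardAvg v N x ^ 2 ≤ forwardAvg (fun y ↦ v y ^ 2) N x := by
  rcases N.eq_zero_or_pos with rfl | hN
  · simp [forwardAvg]
  have hN' : (0 : ℝ) < N := mod_cast hN
  have cauchy_schwarz := sq_sum_le_card_mul_sum_sq (s := range N) (f := fun m ↦ v (x + m))
  rw [card_range] at cauchy_schwarz
  rw [forwardAvg, forwardAvg, div_pow, div_le_div_iff₀ (by positivity) hN']
  nlinarith

lemma sum_range_mul {M : Type*} [AddCommMonoid M] (v : ℤ → M) (K Q : ℕ) (x : ℤ) :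
    ∑ m ∈ range (K * Q), v (x + m) = ∑ k ∈ range K, ∑ m ∈ range Q, v (x + Q * k + m) := by
  induction K with
  | zero => simp
  | succ K ih =>
    rw [add_mul, one_mul, sum_range_add, ih, sum_range_succ]
    congr 1
    refine sum_congr rfl fun m _ ↦ congrArg v ?_
    push_cast
    ring

lemma forwardAvg_mul (v : ℤ → ℝ) (K Q : ℕ) (r y : ℤ) :
    forwardAvg v (K * Q) (r + Q * y) = forwardAvg (fun t ↦ forwardAvg v Q (r + Q * t)) K y := by
  simp only [forwardAvg, ← sum_div, div_div, Nat.cast_mul, sum_range_mul, mul_add, ← add_assoc]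
  rw [mul_comm (K : ℝ)]

lemma hasSum_forwardAvg {Q : ℕ} (hQ : 0 < Q) {w : ℤ → ℝ} (hw : Summable w) (r : ℤ) :
    HasSum (fun t : ℤ ↦ forwardAvg w Q (r + Q * t)) ((∑' x, w x) / Q) := by
  have : NeZero Q := ⟨hQ.ne'⟩
  let e : ℤ × Fin Q ≃ ℤ := (Int.divModEquiv Q).symm.trans (Equiv.addLeft r)
  have block_sum (t : ℤ) : ∑ m : Fin Q, (w ∘ e) (t, m) = ∑ m ∈ range Q, w (r + Q * t + m) := by
    rw [← Fin.sum_univ_eq_sum_range fun m ↦ w (r + Q * t + m)]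
    simp [e, add_assoc, mul_comm]
  have h := (e.hasSum_iff.2 hw.hasSum).prod_fiberwise fun t ↦ hasSum_fintype _
  simp only [block_sum] at h
  exact h.div_const (Q : ℝ)

theorem sum_sq_forwardAvg_residueClass_le {Q : ℕ} (hQ : 0 < Q) {v : ℤ → ℝ} (hv : ∀ x, 0 ≤ v x)
    (hs : Summable fun x ↦ v x ^ 2) (r : ℤ) {N : ℤ → ℕ} (hN : ∀ y, Q ≤ N y) (F : Finset ℤ) :
    ∑ y ∈ F, forwardAvg v (N y) (r + Q * y) ^ 2 ≤ 16 / Q * ∑' x, v x ^ 2 := by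
  set G : ℤ → ℝ := fun t ↦ forwardAvg v Q (r + Q * t)
  have hG (t : ℤ) : 0 ≤ G t := forwardAvg_nonneg hv _ _
  have hG_sq (t : ℤ) : G t ^ 2 ≤ forwardAvg (fun x ↦ v x ^ 2) Q (r + Q * t) := sq_forwardAvg_le ..
  have hsum := hasSum_forwardAvg hQ hs r
  have hG_summable : Summable fun t ↦ G t ^ 2 :=
    hsum.summable.of_nonneg_of_le (fun _ ↦ sq_nonneg _) hG_sq
  let K (y : ℤ) : ℕ := (N y + Q - 1) / Q
  have round_up (y : ℤ) : forwardAvg v (N y) (r + Q * y) ≤ 2 * forwardAvg G (K y) y := by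
    have hK_lower : N y ≤ K y * Q := by
      have := Nat.lt_div_mul_add (a := N y + Q - 1) hQ
      lia
    have hK_upper : K y * Q ≤ 2 * N y := (Nat.div_mul_le_self _ _).trans (by have := hN y; lia)
    rw [← forwardAvg_mul]
    exact forwardAvg_le_two_mul hv hK_lower hK_upper _
  calc ∑ y ∈ F, forwardAvg v (N y) (r + Q * y) ^ 2
      ≤ ∑ y ∈ F, (2 * forwardAvg G (K y) y) ^ 2 := by
        gcongr with y
        exacts [forwardAvg_nonneg hv _ _, round_up y]
    _ = 4 * ∑ y ∈ F, forwardAvg G (K y) y ^ 2 := by rw [mul_sum]; congr! 1 with y; ring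
    _ ≤ 4 * (4 * ∑' t, G t ^ 2) := by gcongr; exact sum_sq_forwardAvg_le hG hG_summable K F
    _ ≤ 4 * (4 * ((∑' x, v x ^ 2) / Q)) := by
        gcongr
        exact hG_summable.tsum_le_tsum hG_sq hsum.summable |>.trans_eq hsum.tsum_eq
    _ = 16 / Q * ∑' x, v x ^ 2 := by ring

lemma sum_le_sum_residueClasses {Q : ℕ} (hQ : 0 < Q) {A : ℤ → ℝ} (hA : ∀ x, 0 ≤ A x)
    (F : Finset ℤ) :
    ∑ x ∈ F, A x ≤ ∑ r ∈ range Q, ∑ y ∈ F.image (· / (Q : ℤ)), A (r + Q * y) := by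
  calc ∑ x ∈ F, A x
      ≤ ∑ x ∈ (range Q ×ˢ F.image (· / (Q : ℤ))).image fun p ↦ (p.1 : ℤ) + Q * p.2, A x := by
        refine sum_le_sum_of_subset_of_nonneg (fun x hx ↦ ?_) fun _ _ _ ↦ hA _
        have hmod : ((x % Q).toNat : ℤ) = x % Q := Int.toNat_of_nonneg (Int.emod_nonneg _ (by lia))
        have hlt : x % Q < Q := Int.emod_lt_of_pos _ (by lia)
        refine mem_image.2 ⟨((x % Q).toNat, x / Q), mem_product.2 ⟨mem_range.2 (by lia),
          mem_image_of_mem _ hx⟩, ?_⟩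
        rw [hmod, Int.emod_add_mul_ediv]
    _ ≤ ∑ p ∈ range Q ×ˢ F.image (· / (Q : ℤ)), A (p.1 + Q * p.2) :=
        sum_image_le_of_nonneg fun _ _ ↦ hA _
    _ = ∑ r ∈ range Q, ∑ y ∈ F.image (· / (Q : ℤ)), A (r + Q * y) := sum_product ..

theorem sum_sq_forwardAvg_le_of_periodic {Q : ℕ} (hQ : 0 < Q) {v : ℤ → ℤ → ℝ}
    (hper : Function.Periodic v Q) (hv : ∀ r x, 0 ≤ v r x) (hs : ∀ r, Summable fun x ↦ v r x ^ 2)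
    {N : ℤ → ℕ} (hN : ∀ x, Q ≤ N x) (F : Finset ℤ) :
    ∑ x ∈ F, forwardAvg (v x) (N x) x ^ 2 ≤ 16 / Q * ∑ r ∈ range Q, ∑' x, v r x ^ 2 := by
  refine (sum_le_sum_residueClasses hQ (A := fun x ↦ forwardAvg (v x) (N x) x ^ 2)
    (fun _ ↦ sq_nonneg _) F).trans ?_
  rw [mul_sum]
  refine sum_le_sum fun r _ ↦ ?_
  simp only [fun y : ℤ ↦ show v (r + Q * y) = v r by
    simpa [mul_comm] using hper.int_mul y r]
  exact sum_sq_forwardAvg_residueClass_le hQ (hv r) (hs r) r (fun y ↦ hN (r + Q * y)) _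

theorem tsum_sq_iSup_le {ι X : Type*} [Nonempty ι] {E : ι → X → ℝ} {B : ℝ}
    (hB : ∀ (σ : X → ι) (F : Finset X), ∑ x ∈ F, E (σ x) x ^ 2 ≤ B) :
    ∑' x, (⨆ i, E i x) ^ 2 ≤ B := by
  have bdd (x : X) : BddAbove (Set.range fun i ↦ E i x) := by
    refine ⟨√B, Set.forall_mem_range.2 fun i ↦ Real.le_sqrt_of_sq_le ?_⟩
    simpa using hB (fun _ ↦ i) {x}
  have near_sup (x : X) : ∃ σ : ℕ → ι,
      Filter.Tendsto (fun k ↦ E (σ k) x) Filter.atTop (nhds (⨆ i, E i x)) := by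
    obtain ⟨u, -, hu, hmem⟩ := exists_seq_tendsto_sSup (Set.range_nonempty fun i ↦ E i x) (bdd x)
    choose σ hσ using hmem
    exact ⟨σ, (funext hσ).symm ▸ hu⟩
  choose σ hσ using near_sup
  exact Real.tsum_le_of_sum_le (fun x ↦ sq_nonneg _) fun F ↦
    le_of_tendsto' (tendsto_finsetSum F fun x _ ↦ (hσ x).pow 2) fun k ↦ hB (σ · k) F

/-- `⨆ (_ : n₀ ≤ n), E n x` is `0`, not `-∞`, where the condition fails; this is harmless because
`E` is nonnegative. -/
theorem tsum_sq_biSup_le {X : Type*} {E : ℕ → X → ℝ} (hE : ∀ n x, 0 ≤ E n x) {n₀ : ℕ} {B : ℝ}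
    (hB : ∀ (σ : X → ℕ) (F : Finset X), (∀ x, n₀ ≤ σ x) → ∑ x ∈ F, E (σ x) x ^ 2 ≤ B) :
    ∑' x, (⨆ (n : ℕ) (_ : n₀ ≤ n), E n x) ^ 2 ≤ B := by
  refine tsum_sq_iSup_le fun σ F ↦ ?_
  refine le_trans ?_ (hB (fun x ↦ max n₀ (σ x)) F fun x ↦ le_max_left _ _)
  gcongr with x
  · exact Real.iSup_nonneg fun _ ↦ hE _ x
  · exact Real.iSup_le (fun h ↦ by rw [max_eq_right h]) (hE _ x)

section Orthogonality

open scoped ComplexConjugate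

theorem sum_norm_sq_sum_mul_of_orthogonal {ι X : Type*} [DecidableEq ι] (s : Finset X)
    (S : Finset ι) {φ : ι → X → ℂ} {c : ℝ}
    (hφ : ∀ i ∈ S, ∀ j ∈ S, ∑ x ∈ s, φ i x * conj (φ j x) = if i = j then (c : ℂ) else 0)
    (a : ι → ℂ) :
    ∑ x ∈ s, ‖∑ i ∈ S, a i * φ i x‖ ^ 2 = c * ∑ i ∈ S, ‖a i‖ ^ 2 := by
  apply Complex.ofReal_injective
  push_cast
  calc ∑ x ∈ s, (‖∑ i ∈ S, a i * φ i x‖ : ℂ) ^ 2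
      = ∑ x ∈ s, ∑ i ∈ S, ∑ j ∈ S, a i * conj (a j) * (φ i x * conj (φ j x)) := by
        refine sum_congr rfl fun x _ ↦ ?_
        rw [← Complex.mul_conj', map_sum, sum_mul_sum]
        refine sum_congr rfl fun i _ ↦ sum_congr rfl fun j _ ↦ ?_
        rw [map_mul]
        ring
    _ = ∑ i ∈ S, ∑ j ∈ S, a i * conj (a j) * ∑ x ∈ s, φ i x * conj (φ j x) := by
        rw [sum_comm]
        refine sum_congr rfl fun i _ ↦ ?_
        rw [sum_comm]
        simp only [mul_sum]
    _ = ∑ i ∈ S, a i * conj (a i) * c := by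
        refine sum_congr rfl fun i hi ↦ ?_
        rw [sum_congr rfl fun j hj ↦ by rw [hφ i hi j hj]]
        simp [hi]
    _ = c * ∑ i ∈ S, (‖a i‖ : ℂ) ^ 2 := by
        simp only [Complex.mul_conj', mul_sum, mul_comm]

end Orthogonality

section GaussSum

lemma norm_mulChar_unit {M : Type*} [CommMonoid M] [Finite Mˣ] (χ : MulChar M ℂ) (u : Mˣ) :
    ‖χ u‖ = 1 :=
  have u_finite : IsOfFinOrder (u : M) := (Units.coeHom M).isOfFinOrder (isOfFinOrder_of_finite u)
  (χ.toMonoidHom.isOfFinOrder u_finite).norm_eq_one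

lemma sum_units_le_sum {M : Type*} [Monoid M] [Fintype M] [Fintype Mˣ] {g : M → ℝ}
    (hg : ∀ x, 0 ≤ g x) : ∑ u : Mˣ, g u ≤ ∑ x, g x := by
  classical
  rw [← sum_image (s := univ) (f := g) Units.val_injective.injOn]
  exact sum_le_univ_sum_of_nonneg hg

variable {R : Type*} [CommRing R] [Fintype R]

lemma sum_norm_sq_mulChar [Fintype Rˣ] (χ : MulChar R ℂ) :
    ∑ x, ‖χ x‖ ^ 2 = Fintype.card Rˣ := by
  classical
  calc ∑ x, ‖χ x‖ ^ 2
      = ∑ x ∈ univ.image ((↑) : Rˣ → R), ‖χ x‖ ^ 2 := by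
        refine (sum_subset (subset_univ _) fun x _ hx ↦ ?_).symm
        rw [χ.map_nonunit fun h ↦ hx (mem_image.2 ⟨h.unit, mem_univ _, rfl⟩)]
        simp
    _ = ∑ u : Rˣ, ‖χ u‖ ^ 2 := sum_image (f := fun x ↦ ‖χ x‖ ^ 2) Units.val_injective.injOn
    _ = Fintype.card Rˣ := by simp [norm_mulChar_unit]

lemma norm_gaussSum_mulShift (χ : MulChar R ℂ) (ψ : AddChar R ℂ) (u : Rˣ) :
    ‖gaussSum χ (ψ.mulShift u)‖ = ‖gaussSum χ ψ‖ := by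
  rw [← gaussSum_mulShift χ ψ u, norm_mul, norm_mulChar_unit, one_mul]

lemma sum_norm_sq_gaussSum_mulShift (χ : MulChar R ℂ) {ψ : AddChar R ℂ} (hψ : ψ.IsPrimitive) :
    ∑ b, ‖gaussSum χ (ψ.mulShift b)‖ ^ 2 = Fintype.card R * ∑ x, ‖χ x‖ ^ 2 := by
  classical
  refine sum_norm_sq_sum_mul_of_orthogonal univ univ (φ := fun x b ↦ ψ.mulShift b x)
    (c := Fintype.card R) (fun x _ y _ ↦ ?_) χ
  simp only [AddChar.mulShift_apply, ← AddChar.map_neg_eq_conj, ← AddChar.map_add_eq_mul,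
    ← mul_neg, ← mul_add, ← sub_eq_add_neg, AddChar.sum_mulShift _ hψ, sub_eq_zero]
  push_cast
  rfl

theorem norm_gaussSum_sq_le_card (χ : MulChar R ℂ) {ψ : AddChar R ℂ} (hψ : ψ.IsPrimitive) :
    ‖gaussSum χ ψ‖ ^ 2 ≤ Fintype.card R := by
  classical
  have hunits : (0 : ℝ) < Fintype.card Rˣ := mod_cast Fintype.card_pos
  refine le_of_mul_le_mul_left ?_ hunits
  calc Fintype.card Rˣ * ‖gaussSum χ ψ‖ ^ 2
      = ∑ u : Rˣ, ‖gaussSum χ (ψ.mulShift u)‖ ^ 2 := by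
        simp [norm_gaussSum_mulShift]
    _ ≤ ∑ b : R, ‖gaussSum χ (ψ.mulShift b)‖ ^ 2 :=
        sum_units_le_sum (g := fun b ↦ ‖gaussSum χ (ψ.mulShift b)‖ ^ 2) fun _ ↦ sq_nonneg _
    _ = Fintype.card Rˣ * Fintype.card R := by
        rw [sum_norm_sq_gaussSum_mulShift χ hψ, sum_norm_sq_mulChar, mul_comm]

end GaussSum

lemma sum_Icc_natCast_zmod {M : Type*} [AddCommMonoid M] {q : ℕ} [NeZero q] (F : ZMod q → M) :
    ∑ r ∈ Icc 1 q, F r = ∑ x, F x := by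
  calc ∑ r ∈ Icc 1 q, F r = ∑ r ∈ range q, F (r + 1 : ℕ) := by
        rw [range_eq_Ico, sum_Ico_add' (fun r : ℕ ↦ F r) 0 q 1]
        rfl
    _ = ∑ x, F (x + 1) := by
        obtain ⟨k, rfl⟩ := Nat.exists_eq_succ_of_ne_zero (NeZero.ne q)
        rw [sum_range]
        refine sum_congr rfl fun x _ ↦ ?_
        rw [Nat.cast_add_one]
        exact congrArg (fun y ↦ F (y + 1)) (Fin.cast_val_eq_self x)
    _ = ∑ x, F x := Equiv.sum_comp (Equiv.addRight (1 : ZMod q)) F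

lemma gaussG_eq_gaussSum {q : ℕ} [NeZero q] (χ : DirichletCharacter ℂ q) (n : ℤ) :
    gaussG q χ n = (q.totient : ℂ)⁻¹ * gaussSum χ (ZMod.stdAddChar.mulShift (n : ZMod q)) := by
  have term (r : ℕ) : χ (r : ZMod q) * Complex.exp (2 * Real.pi * Complex.I * r * n / q) =
      χ (r : ZMod q) * ZMod.stdAddChar.mulShift (n : ZMod q) (r : ZMod q) := by
    have h := ZMod.stdAddChar_coe (N := q) (n * r)
    push_cast at h
    rw [AddChar.mulShift_apply, h]
    ring_nf
  rw [gaussG, gaussSum, ← sum_Icc_natCast_zmod, Aq]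
  congr 1
  simp only [term]
  refine sum_subset (filter_subset _ _) fun r hr hr' ↦ ?_
  rw [χ.map_nonunit fun h ↦ hr' (mem_filter.2 ⟨hr, (ZMod.isUnit_iff_coprime r q).1 h⟩), zero_mul]

lemma inv_card_succ_le_prod_one_sub_inv (P : Finset ℕ) (hP : ∀ p ∈ P, 2 ≤ p) :
    ((#P : ℝ) + 1)⁻¹ ≤ ∏ p ∈ P, (1 - (p : ℝ)⁻¹) := by
  induction P using Finset.induction_on_max with
  | empty => simp
  | insert m P hm ih =>
    have hmP : m ∉ P := fun h ↦ lt_irrefl _ (hm m h)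
    have hcard : (#P : ℝ) + 2 ≤ m := by
      have hsub : P ⊆ Ico 2 m := fun p hp ↦ mem_Ico.2 ⟨hP p (mem_insert_of_mem hp), hm p hp⟩
      have := card_le_card hsub
      have := hP m (mem_insert_self _ _)
      rw [Nat.card_Ico] at *
      exact_mod_cast (by lia : #P + 2 ≤ m)
    have ih := ih fun p hp ↦ hP p (mem_insert_of_mem hp)
    rw [prod_insert hmP, card_insert_of_notMem hmP, Nat.cast_add_one]
    calc ((#P : ℝ) + 1 + 1)⁻¹ = (1 - ((#P : ℝ) + 2)⁻¹) * ((#P : ℝ) + 1)⁻¹ := by field_simp; ring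
      _ ≤ (1 - (m : ℝ)⁻¹) * ∏ p ∈ P, (1 - (p : ℝ)⁻¹) := by
        gcongr
        rw [sub_nonneg]
        exact inv_le_one_of_one_le₀ (by linarith [(#P).cast_nonneg (α := ℝ)])

lemma card_primeFactors_le_log {n : ℕ} (hn : n ≠ 0) : #n.primeFactors ≤ Nat.log 2 n :=
  Nat.le_log_of_pow_le one_lt_two <|
    (pow_card_le_prod _ _ _ fun _ hp ↦ (Nat.prime_of_mem_primeFactors hp).two_le).trans
      (Nat.le_of_dvd hn.bot_lt (Nat.prod_primeFactors_dvd n))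

lemma le_log_succ_mul_totient (q : ℕ) : (q : ℝ) ≤ (Nat.log 2 q + 1) * q.totient := by
  rcases eq_or_ne q 0 with rfl | hq
  · simp
  have totient_eq : (q.totient : ℝ) = q * ∏ p ∈ q.primeFactors, (1 - (p : ℝ)⁻¹) := by
    simpa using congrArg (Rat.cast : ℚ → ℝ) (Nat.totient_eq_mul_prod_factors q)
  have prod_ge : ((Nat.log 2 q : ℝ) + 1)⁻¹ ≤ ∏ p ∈ q.primeFactors, (1 - (p : ℝ)⁻¹) := by
    refine le_trans ?_ (inv_card_succ_le_prod_one_sub_inv q.primeFactors fun p hp ↦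
      (Nat.prime_of_mem_primeFactors hp).two_le)
    gcongr
    exact card_primeFactors_le_log hq
  rw [totient_eq, mul_left_comm]
  refine le_mul_of_one_le_right q.cast_nonneg ?_
  rwa [← inv_le_iff_one_le_mul₀' (by positivity)]

theorem norm_gaussG_sq_le {q : ℕ} [NeZero q] (χ : DirichletCharacter ℂ q) {n : ℤ}
    (hn : IsUnit (n : ZMod q)) : ‖gaussG q χ n‖ ^ 2 ≤ (Nat.log 2 q + 1) ^ 2 / q := by
  have hq : (0 : ℝ) < q := mod_cast NeZero.pos q
  have hφ : (0 : ℝ) < q.totient := mod_cast Nat.totient_pos.2 (NeZero.pos q)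
  have hgauss : ‖gaussSum χ (ZMod.stdAddChar.mulShift (n : ZMod q))‖ ^ 2 ≤ q := by
    rw [← hn.unit_spec, norm_gaussSum_mulShift]
    simpa [ZMod.card] using norm_gaussSum_sq_le_card χ (ZMod.isPrimitive_stdAddChar q)
  calc ‖gaussG q χ n‖ ^ 2
      = ‖gaussSum χ (ZMod.stdAddChar.mulShift (n : ZMod q))‖ ^ 2 / (q.totient : ℝ) ^ 2 := by
        rw [gaussG_eq_gaussSum, norm_mul, norm_inv, Complex.norm_natCast]
        ring
    _ ≤ q / (q.totient : ℝ) ^ 2 := by gcongr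
    _ ≤ (Nat.log 2 q + 1) ^ 2 / q := by
        rw [div_le_div_iff₀ (by positivity) hq, ← sq, ← mul_pow]
        gcongr
        exact le_log_succ_mul_totient q

section Multifrequency

open scoped FourierTransform ComplexConjugate

lemma fourierChar_eq_one_iff (t : ℝ) : 𝐞 t = 1 ↔ ∃ n : ℤ, t = n := by
  rw [Real.fourierChar_apply', Circle.exp_eq_one]
  refine exists_congr fun n ↦ ?_
  rw [mul_comm (n : ℝ)]
  exact mul_right_inj' Real.two_pi_pos.ne'

lemma fourierChar_mul_periodic {θ : ℝ} {Q : ℕ} (hθ : ∃ k : ℤ, Q * θ = k) :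
    Function.Periodic (fun r : ℤ ↦ 𝐞 (θ * r)) Q := fun r ↦ by
  have : 𝐞 (θ * Q) = 1 := (fourierChar_eq_one_iff _).2 (by rwa [mul_comm])
  simp [mul_add, AddChar.map_add_eq_mul, this]

lemma fourierChar_mul_natCast (t : ℝ) (r : ℕ) : 𝐞 (t * r) = 𝐞 t ^ r := by
  rw [mul_comm, ← nsmul_eq_mul, AddChar.map_nsmul_eq_pow]

lemma sum_range_fourierChar_mul_eq_zero {Q : ℕ} {t : ℝ} (hQt : ∃ k : ℤ, Q * t = k)
    (ht : ¬ ∃ k : ℤ, t = k) : ∑ r ∈ range Q, (𝐞 (t * r) : ℂ) = 0 := by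
  have ne_one : (𝐞 t : ℂ) ≠ 1 := fun h ↦ ht ((fourierChar_eq_one_iff t).1 (Circle.coe_eq_one.1 h))
  have pow_eq_one : 𝐞 t ^ Q = 1 := by
    rwa [← fourierChar_mul_natCast, fourierChar_eq_one_iff, mul_comm]
  simp only [fourierChar_mul_natCast, Circle.coe_pow]
  rw [geom_sum_eq ne_one, ← Circle.coe_pow, pow_eq_one, Circle.coe_one, sub_self, zero_div]

variable {ι : Type*} {S : Finset ι} {θ : ι → ℝ} {Q : ℕ}

lemma sum_range_norm_sq_exponential_sum (hQθ : ∀ i ∈ S, ∃ k : ℤ, Q * θ i = k)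
    (hθ : ∀ i ∈ S, ∀ j ∈ S, (∃ k : ℤ, θ i - θ j = k) → i = j) (a : ι → ℂ) :
    ∑ r ∈ range Q, ‖∑ i ∈ S, a i * 𝐞 (θ i * r)‖ ^ 2 = Q * ∑ i ∈ S, ‖a i‖ ^ 2 := by
  classical
  refine sum_norm_sq_sum_mul_of_orthogonal (range Q) S (φ := fun i r ↦ 𝐞 (θ i * r)) (c := Q)
    (fun i hi j hj ↦ ?_) a
  have phase (r : ℕ) : (𝐞 (θ i * r) : ℂ) * conj (𝐞 (θ j * r) : ℂ) = 𝐞 ((θ i - θ j) * r) := by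
    rw [sub_mul, AddChar.map_sub_eq_div, Circle.coe_div, div_eq_mul_inv, ← Circle.coe_inv_eq_conj,
      Circle.coe_inv]
  simp only [phase]
  split_ifs with hij
  · simp [hij]
  · obtain ⟨k, hk⟩ := hQθ i hi
    obtain ⟨l, hl⟩ := hQθ j hj
    exact sum_range_fourierChar_mul_eq_zero ⟨k - l, by push_cast; rw [mul_sub, hk, hl]⟩
      (mt (hθ i hi j hj) hij)

lemma summable_norm_sq_sum {X : Type*} {h : ι → X → ℂ}
    (hh : ∀ i ∈ S, Summable fun z ↦ ‖h i z‖ ^ 2) :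
    Summable fun z ↦ ‖∑ i ∈ S, h i z‖ ^ 2 := by
  refine .of_nonneg_of_le (fun _ ↦ sq_nonneg _) (fun z ↦ ?_) ((summable_sum hh).mul_left (#S : ℝ))
  calc ‖∑ i ∈ S, h i z‖ ^ 2 ≤ (∑ i ∈ S, ‖h i z‖) ^ 2 := by gcongr; exact norm_sum_le _ _
    _ ≤ #S * ∑ i ∈ S, ‖h i z‖ ^ 2 := sq_sum_le_card_mul_sum_sq

/-- Rational frequencies with common denominator `Q` cost nothing at scales at least `Q`: the
modulations depend on `x` modulo `Q` only, and are orthogonal over a period. -/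
theorem sum_sq_forwardAvg_exponential_sum_le (hQ : 0 < Q)
    (hQθ : ∀ i ∈ S, ∃ k : ℤ, Q * θ i = k)
    (hθ : ∀ i ∈ S, ∀ j ∈ S, (∃ k : ℤ, θ i - θ j = k) → i = j) {h : ι → ℤ → ℂ}
    (hh : ∀ i ∈ S, Summable fun z ↦ ‖h i z‖ ^ 2) {N : ℤ → ℕ} (hN : ∀ x, Q ≤ N x)
    (F : Finset ℤ) :
    ∑ x ∈ F, forwardAvg (fun z ↦ ‖∑ i ∈ S, h i z * 𝐞 (θ i * x)‖) (N x) x ^ 2 ≤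
      16 * ∑ i ∈ S, ∑' z, ‖h i z‖ ^ 2 := by
  have hper : Function.Periodic (fun (r : ℤ) z ↦ ‖∑ i ∈ S, h i z * 𝐞 (θ i * r)‖) Q := fun r ↦ by
    ext z
    exact congrArg norm <| sum_congr rfl fun i hi ↦
      congrArg (fun u : Circle ↦ h i z * (u : ℂ)) (fourierChar_mul_periodic (hQθ i hi) r)
  have hsum (r : ℤ) : Summable fun z ↦ ‖∑ i ∈ S, h i z * 𝐞 (θ i * r)‖ ^ 2 :=
    summable_norm_sq_sum fun i hi ↦ by
      simpa only [norm_mul, Circle.norm_coe, mul_one] using hh i hi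
  refine (sum_sq_forwardAvg_le_of_periodic hQ hper (fun _ _ ↦ norm_nonneg _) hsum hN F).trans_eq ?_
  have hQ' : (Q : ℝ) ≠ 0 := by positivity
  calc (16 / Q : ℝ) * ∑ r ∈ range Q, ∑' z, ‖∑ i ∈ S, h i z * 𝐞 (θ i * (r : ℤ))‖ ^ 2
      = 16 / Q * ∑' z, ∑ r ∈ range Q, ‖∑ i ∈ S, h i z * 𝐞 (θ i * r)‖ ^ 2 := by
        simp only [← Int.cast_natCast (R := ℝ)]
        rw [Summable.tsum_finsetSum fun (r : ℕ) _ ↦ hsum r]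
    _ = 16 / Q * (Q * ∑ i ∈ S, ∑' z, ‖h i z‖ ^ 2) := by
        simp only [sum_range_norm_sq_exponential_sum hQθ hθ, tsum_mul_left]
        rw [Summable.tsum_finsetSum hh]
    _ = 16 * ∑ i ∈ S, ∑' z, ‖h i z‖ ^ 2 := by field_simp

end Multifrequency

section Fourier

open scoped FourierTransform ComplexConjugate
open MeasureTheory
open Complex (I)

lemma exp_eq_fourierChar {z : ℂ} {t : ℝ} (h : z = 2 * Real.pi * I * t) :
    Complex.exp z = 𝐞 t := by
  rw [h, Real.fourierChar_apply]
  push_cast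
  congr 1
  ring

lemma FinvInt_eq_integral_fourierChar (g : ℝ → ℂ) (x : ℤ) :
    FinvInt g x = ∫ ξ in (0 : ℝ)..1, g ξ * 𝐞 (ξ * x) :=
  intervalIntegral.integral_congr fun ξ _ ↦
    congrArg (g ξ * ·) (exp_eq_fourierChar (by push_cast; ring))

lemma fhat_eq_tsum_fourierChar (f : ℤ → ℂ) (ξ : ℝ) :
    fhat f ξ = ∑' n : ℤ, f n * (𝐞 (-(ξ * n)) : ℂ) :=
  tsum_congr fun n ↦ congrArg (f n * ·) (exp_eq_fourierChar (by push_cast; ring))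

lemma continuous_fourierChar_mul (t : ℝ) : Continuous fun ξ ↦ (𝐞 (ξ * t) : ℂ) :=
  continuous_subtype_val.comp (Real.continuous_fourierChar.comp (continuous_mul_const t))

lemma intervalIntegrable_mul_fourierChar {g : ℝ → ℂ} {a b : ℝ}
    (hg : IntervalIntegrable g volume a b) (t : ℝ) :
    IntervalIntegrable (fun ξ ↦ g ξ * 𝐞 (ξ * t)) volume a b :=
  hg.mul_continuousOn (continuous_fourierChar_mul t).continuousOn

lemma integral_fourierChar_mul_intCast {k : ℤ} (hk : k ≠ 0) :
    ∫ ξ in (0 : ℝ)..1, (𝐞 (ξ * k) : ℂ) = 0 := by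
  have hc : 2 * Real.pi * I * (k : ℂ) ≠ 0 :=
    mul_ne_zero Complex.two_pi_I_ne_zero (Int.cast_ne_zero.2 hk)
  have exp_one : Complex.exp (2 * Real.pi * I * k) = 1 := by
    rw [mul_comm]
    exact Complex.exp_int_mul_two_pi_mul_I k
  calc ∫ ξ in (0 : ℝ)..1, (𝐞 (ξ * k) : ℂ)
      = ∫ ξ in (0 : ℝ)..1, Complex.exp (2 * Real.pi * I * k * ξ) :=
        intervalIntegral.integral_congr fun ξ _ ↦
          (exp_eq_fourierChar (by push_cast; ring)).symm
    _ = 0 := by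
        rw [integral_exp_mul_complex hc, Complex.ofReal_one, Complex.ofReal_zero, mul_one, mul_zero,
          exp_one, Complex.exp_zero, sub_self, zero_div]

theorem hasSum_norm_sq_FinvInt {g : ℝ → ℂ} (hg : MemLp g 2 (volume.restrict (Set.Ioc 0 1))) :
    HasSum (fun x ↦ ‖FinvInt g x‖ ^ 2) (∫ ξ in (0 : ℝ)..1, ‖g ξ‖ ^ 2) := by
  have coeff (x : ℤ) : fourierCoeffOn zero_lt_one g (-x) = FinvInt g x := by
    rw [fourierCoeffOn_eq_integral, FinvInt]
    simp only [neg_neg, fourier_coe_apply, sub_zero, div_one, one_smul, smul_eq_mul]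
    congr! 2 with ξ
    rw [mul_comm]
    congr 2
    push_cast
    ring
  simpa [coeff, Function.comp_def] using
    (Equiv.neg ℤ).hasSum_iff.2 (hasSum_sq_fourierCoeffOn zero_lt_one hg)

variable {f : ℤ → ℂ} (hf : Summable f)
include hf

lemma continuous_fhat : Continuous (fhat f) := by
  simp only [funext (fhat_eq_tsum_fourierChar f), ← mul_neg]
  exact continuous_tsum (fun n ↦ continuous_const.mul (continuous_fourierChar_mul _)) hf.norm
    fun n ξ ↦ by rw [norm_mul, Circle.norm_coe, mul_one]

theorem FinvInt_fhat (x : ℤ) : FinvInt (fhat f) x = f x := by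
  have expand (ξ : ℝ) :
      HasSum (fun n : ℤ ↦ f n * 𝐞 (ξ * (x - n : ℤ))) (fhat f ξ * 𝐞 (ξ * x)) := by
    have h : Summable fun n : ℤ ↦ f n * (𝐞 (-(ξ * n)) : ℂ) :=
      .of_norm (by simpa only [norm_mul, Circle.norm_coe, mul_one] using hf.norm)
    have phase (n : ℤ) : 𝐞 (ξ * (x - n : ℤ)) = 𝐞 (-(ξ * n)) * 𝐞 (ξ * x) := by
      rw [← AddChar.map_add_eq_mul]
      congr 1
      push_cast
      ring
    simp only [fhat_eq_tsum_fourierChar, phase, Circle.coe_mul, ← mul_assoc]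
    exact h.hasSum.mul_right _
  have integral_term (n : ℤ) :
      ∫ ξ in (0 : ℝ)..1, f n * (𝐞 (ξ * (x - n : ℤ)) : ℂ) = if n = x then f x else 0 := by
    rw [intervalIntegral.integral_const_mul]
    split_ifs with h
    · simp [h]
    · rw [integral_fourierChar_mul_intCast (sub_ne_zero.2 (Ne.symm h)), mul_zero]
  have hasSum_integral := intervalIntegral.hasSum_integral_of_dominated_convergence
    (μ := volume) (a := 0) (b := 1) (F := fun n ξ ↦ f n * (𝐞 (ξ * (x - n : ℤ)) : ℂ))
    (fun n _ ↦ ‖f n‖)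
    (fun n ↦ (continuous_const.mul (continuous_fourierChar_mul _)).aestronglyMeasurable)
    (fun n ↦ ae_of_all _ fun ξ _ ↦ by rw [norm_mul, Circle.norm_coe, mul_one])
    (ae_of_all _ fun _ _ ↦ hf.norm) intervalIntegrable_const (ae_of_all _ fun ξ _ ↦ expand ξ)
  simp only [integral_term] at hasSum_integral
  rw [FinvInt_eq_integral_fourierChar]
  exact hasSum_integral.unique (hasSum_ite_eq x (f x))

lemma memLp_fhat : MemLp (fhat f) 2 (volume.restrict (Set.Ioc 0 1)) := by
  refine .of_bound (continuous_fhat hf).aestronglyMeasurable (∑' n, ‖f n‖) (ae_of_all _ fun ξ ↦ ?_)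
  rw [fhat_eq_tsum_fourierChar]
  exact tsum_of_norm_bounded hf.norm.hasSum fun n ↦ by rw [norm_mul, Circle.norm_coe, mul_one]

theorem integral_norm_sq_fhat : ∫ ξ in (0 : ℝ)..1, ‖fhat f ξ‖ ^ 2 = ∑' x, ‖f x‖ ^ 2 := by
  simpa only [FinvInt_fhat hf] using (hasSum_norm_sq_FinvInt (memLp_fhat hf)).tsum_eq.symm

end Fourier

section Mhat

open scoped FourierTransform
open MeasureTheory

/-- The weight `((m + 1)^β - m^β) / β` of the term of index `m + 1` in `Mhat β N`. -/
noncomputable def powIncrement (β : ℝ) (m : ℕ) : ℝ :=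
  (((m : ℝ) + 1) ^ β - (m : ℝ) ^ β) / β

lemma abs_powIncrement_le {β : ℝ} (hβ : 0 < β) (hβ1 : β ≤ 1) (m : ℕ) :
    |powIncrement β m| ≤ β⁻¹ := by
  have upper := Real.rpow_add_le_add_rpow m.cast_nonneg zero_le_one hβ.le hβ1
  have lower : (m : ℝ) ^ β ≤ ((m : ℝ) + 1) ^ β := by gcongr; linarith
  rw [Real.one_rpow] at upper
  rw [powIncrement, abs_of_nonneg (div_nonneg (sub_nonneg.2 lower) hβ.le), inv_eq_one_div]
  gcongr
  linarith

lemma Mhat_eq_sum_powIncrement (β : ℝ) (N : ℕ) (ξ : ℝ) :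
    Mhat β N ξ =
      (N : ℂ)⁻¹ * ∑ m ∈ range N, (powIncrement β m : ℂ) * (𝐞 (ξ * (m + 1)) : ℂ) := by
  have term (m : ℕ) : ((((((m + 1 : ℕ) : ℝ) ^ β - (((m + 1 : ℕ) : ℝ) - 1) ^ β) / β) : ℝ) : ℂ) *
      Complex.exp (2 * Real.pi * Complex.I * ξ * (m + 1 : ℕ)) =
        (powIncrement β m : ℂ) * (𝐞 (ξ * (m + 1)) : ℂ) := by
    rw [exp_eq_fourierChar (t := ξ * (m + 1)) (by push_cast; ring), powIncrement, Nat.cast_succ,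
      add_sub_cancel_right]
  rw [Mhat, ← Ico_add_one_right_eq_Icc, ← zero_add 1, ← sum_Ico_add', Nat.Ico_zero_eq_range]
  exact congrArg _ (sum_congr rfl fun m _ ↦ term m)

lemma FinvInt_Mhat_sub_mul {G : ℝ → ℂ} (hG : IntervalIntegrable G volume 0 1) (β : ℝ) (N : ℕ)
    (θ : ℝ) (x : ℤ) :
    FinvInt (fun ξ ↦ Mhat β N (ξ - θ) * G ξ) x = (N : ℂ)⁻¹ * ∑ m ∈ range N,
      (powIncrement β m : ℂ) * ((𝐞 (-(θ * (m + 1))) : ℂ) * FinvInt G (x + m + 1)) := by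
  have phase (ξ : ℝ) (m : ℕ) : (𝐞 ((ξ - θ) * (m + 1)) * 𝐞 (ξ * x) : ℂ) =
      𝐞 (-(θ * (m + 1))) * 𝐞 (ξ * (x + m + 1 : ℤ)) := by
    rw [← Circle.coe_mul, ← Circle.coe_mul, ← AddChar.map_add_eq_mul, ← AddChar.map_add_eq_mul]
    congr 2
    push_cast
    ring
  have expand (ξ : ℝ) : Mhat β N (ξ - θ) * G ξ * 𝐞 (ξ * x) = (N : ℂ)⁻¹ * ∑ m ∈ range N,
      (powIncrement β m : ℂ) *
        ((𝐞 (-(θ * (m + 1))) : ℂ) * (G ξ * 𝐞 (ξ * (x + m + 1 : ℤ)))) := by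
    rw [Mhat_eq_sum_powIncrement, mul_assoc, mul_assoc, sum_mul]
    congr 1
    refine sum_congr rfl fun m _ ↦ ?_
    linear_combination powIncrement β m * G ξ * phase ξ m
  have integrable (m : ℕ) := intervalIntegrable_mul_fourierChar hG (x + m + 1 : ℤ)
  simp only [FinvInt_eq_integral_fourierChar, expand, intervalIntegral.integral_const_mul]
  rw [intervalIntegral.integral_finsetSum fun m _ ↦ ((integrable m).const_mul _).const_mul _]
  simp only [intervalIntegral.integral_const_mul]

variable {ι : Type*} {S : Finset ι} {θ : ι → ℝ} {Q : ℕ} {β : ℝ} {c : ι → ℂ} {G : ι → ℝ → ℂ}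

lemma norm_sum_FinvInt_Mhat_le (hβ : 0 < β) (hβ1 : β ≤ 1)
    (hG : ∀ i ∈ S, IntervalIntegrable (G i) volume 0 1) (N : ℕ) (x : ℤ) :
    ‖∑ i ∈ S, c i * FinvInt (fun ξ ↦ Mhat β N (ξ - θ i) * G i ξ) x‖ ≤
      β⁻¹ * forwardAvg (fun z ↦ ‖∑ i ∈ S,
        c i * 𝐞 (-(θ i * (z + 1))) * FinvInt (G i) (z + 1) * 𝐞 (θ i * x)‖) N x := by
  set U : ℕ → ℂ := fun m ↦ ∑ i ∈ S,
    c i * 𝐞 (-(θ i * ((x + m : ℤ) + 1))) * FinvInt (G i) (x + m + 1) * 𝐞 (θ i * x)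
  have phase (i : ι) (m : ℕ) :
      (𝐞 (-(θ i * (m + 1))) : ℂ) = 𝐞 (-(θ i * ((x + m : ℤ) + 1))) * 𝐞 (θ i * x) := by
    rw [← Circle.coe_mul, ← AddChar.map_add_eq_mul]
    congr 2
    push_cast
    ring
  have expand : ∑ i ∈ S, c i * FinvInt (fun ξ ↦ Mhat β N (ξ - θ i) * G i ξ) x =
      (N : ℂ)⁻¹ * ∑ m ∈ range N, powIncrement β m * U m := by
    simp only [U, mul_sum]
    rw [sum_comm]
    refine sum_congr rfl fun i hi ↦ ?_
    rw [FinvInt_Mhat_sub_mul (hG i hi), mul_sum, mul_sum]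
    refine sum_congr rfl fun m _ ↦ ?_
    rw [phase]
    ring
  calc ‖∑ i ∈ S, c i * FinvInt (fun ξ ↦ Mhat β N (ξ - θ i) * G i ξ) x‖
      ≤ (N : ℝ)⁻¹ * ∑ m ∈ range N, β⁻¹ * ‖U m‖ := by
        rw [expand, norm_mul, norm_inv, Complex.norm_natCast]
        gcongr
        refine norm_sum_le_of_le _ fun m _ ↦ ?_
        rw [norm_mul, Complex.norm_real]
        gcongr
        exact abs_powIncrement_le hβ hβ1 m
    _ = _ := by
        rw [← mul_sum, forwardAvg]
        ring

theorem sum_norm_sq_sum_FinvInt_Mhat_le (hβ : 0 < β) (hβ1 : β ≤ 1) (hQ : 0 < Q)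
    (hQθ : ∀ i ∈ S, ∃ k : ℤ, Q * θ i = k)
    (hθ : ∀ i ∈ S, ∀ j ∈ S, (∃ k : ℤ, θ i - θ j = k) → i = j)
    (hG : ∀ i ∈ S, MemLp (G i) 2 (volume.restrict (Set.Ioc 0 1))) {N : ℤ → ℕ}
    (hN : ∀ x, Q ≤ N x) (F : Finset ℤ) :
    ∑ x ∈ F, ‖∑ i ∈ S, c i * FinvInt (fun ξ ↦ Mhat β (N x) (ξ - θ i) * G i ξ) x‖ ^ 2 ≤
      16 * β⁻¹ ^ 2 * ∑ i ∈ S, ‖c i‖ ^ 2 * ∫ ξ in (0 : ℝ)..1, ‖G i ξ‖ ^ 2 := by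
  set h : ι → ℤ → ℂ := fun i z ↦ c i * 𝐞 (-(θ i * (z + 1))) * FinvInt (G i) (z + 1) with h_def
  have integrable (i) (hi : i ∈ S) : IntervalIntegrable (G i) volume 0 1 :=
    (intervalIntegrable_iff_integrableOn_Ioc_of_le zero_le_one).2 ((hG i hi).integrable one_le_two)
  have hasSum_h (i) (hi : i ∈ S) :
      HasSum (fun z ↦ ‖h i z‖ ^ 2) (‖c i‖ ^ 2 * ∫ ξ in (0 : ℝ)..1, ‖G i ξ‖ ^ 2) := by
    simp only [h_def, norm_mul, Circle.norm_coe, mul_one, mul_pow]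
    exact ((Equiv.addRight (1 : ℤ)).hasSum_iff.2 (hasSum_norm_sq_FinvInt (hG i hi))).mul_left _
  calc ∑ x ∈ F, ‖∑ i ∈ S, c i * FinvInt (fun ξ ↦ Mhat β (N x) (ξ - θ i) * G i ξ) x‖ ^ 2
      ≤ ∑ x ∈ F, (β⁻¹ * forwardAvg (fun z ↦ ‖∑ i ∈ S, h i z * 𝐞 (θ i * x)‖) (N x) x) ^ 2 := by
        gcongr with x
        exact norm_sum_FinvInt_Mhat_le hβ hβ1 integrable (N x) x
    _ = β⁻¹ ^ 2 * ∑ x ∈ F, forwardAvg (fun z ↦ ‖∑ i ∈ S, h i z * 𝐞 (θ i * x)‖) (N x) x ^ 2 := by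
        simp only [mul_pow, mul_sum]
    _ ≤ β⁻¹ ^ 2 * (16 * ∑ i ∈ S, ∑' z, ‖h i z‖ ^ 2) := by
        gcongr
        exact sum_sq_forwardAvg_exponential_sum_le hQ hQθ hθ
          (fun i hi ↦ (hasSum_h i hi).summable) hN F
    _ = 16 * β⁻¹ ^ 2 * ∑ i ∈ S, ‖c i‖ ^ 2 * ∫ ξ in (0 : ℝ)..1, ‖G i ξ‖ ^ 2 := by
        rw [sum_congr rfl fun i hi ↦ (hasSum_h i hi).tsum_eq]
        ring

end Mhat

section Cutoff

variable {η : ℝ → ℝ} (hη : ∀ ξ : ℝ, 1 / 2 ≤ |ξ| → η ξ = 0)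
include hη

lemma etaPer_eq_round (s : ℕ) (ξ : ℝ) : etaPer η s ξ = η (2 ^ (4 * s) * (ξ - round ξ)) := by
  refine tsum_eq_single _ fun k hk ↦ hη _ ?_
  have one_le : (1 : ℝ) ≤ |(k : ℝ) - round ξ| := mod_cast Int.one_le_abs (sub_ne_zero.2 hk)
  have triangle : |(k : ℝ) - round ξ| ≤ |ξ - k| + |ξ - round ξ| := by
    rw [abs_sub_comm ξ k]
    exact abs_sub_le ..
  have half_le : 1 / 2 ≤ |ξ - k| := by linarith [abs_sub_round ξ]
  have one_le_scale : (1 : ℝ) ≤ 2 ^ (4 * s) := one_le_pow₀ one_le_two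
  rw [abs_mul, abs_of_pos (by positivity : (0 : ℝ) < 2 ^ (4 * s))]
  nlinarith

lemma measurable_etaPer (hm : Measurable η) (s : ℕ) : Measurable (etaPer η s) := by
  simp only [funext (etaPer_eq_round hη s), round_eq]
  fun_prop

lemma abs_etaPer_le_one (h1 : ∀ ξ, |η ξ| ≤ 1) (s : ℕ) (ξ : ℝ) : |etaPer η s ξ| ≤ 1 := by
  rw [etaPer_eq_round hη]
  exact h1 _

lemma abs_sub_round_lt_of_etaPer_ne_zero {s : ℕ} {ξ : ℝ} (h : etaPer η s ξ ≠ 0) :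
    2 ^ (4 * s) * |ξ - round ξ| < 1 / 2 := by
  rw [etaPer_eq_round hη] at h
  have := mt (hη _) h
  rwa [not_le, abs_mul, abs_of_pos (by positivity : (0 : ℝ) < 2 ^ (4 * s))] at this

theorem sum_sq_etaPer_sub_le_one (h1 : ∀ ξ, |η ξ| ≤ 1) {ι : Type*} {S : Finset ι} {θ : ι → ℝ}
    {s : ℕ} (hθ : ∀ i ∈ S, ∀ j ∈ S, ∀ k : ℤ, 2 ^ (4 * s) * |θ i - θ j - k| < 1 → i = j) (ξ : ℝ) :
    ∑ i ∈ S, etaPer η s (ξ - θ i) ^ 2 ≤ 1 := by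
  classical
  have disjoint : #{i ∈ S | etaPer η s (ξ - θ i) ^ 2 ≠ 0} ≤ 1 := by
    refine card_le_one.2 fun i hi j hj ↦ ?_
    simp only [mem_filter, ne_eq, sq_eq_zero_iff] at hi hj
    have hi' := abs_sub_round_lt_of_etaPer_ne_zero hη hi.2
    have hj' := abs_sub_round_lt_of_etaPer_ne_zero hη hj.2
    refine hθ i hi.1 j hj.1 (round (ξ - θ j) - round (ξ - θ i)) ?_
    have triangle : |θ i - θ j - ((round (ξ - θ j) - round (ξ - θ i) : ℤ) : ℝ)| ≤
        |ξ - θ j - round (ξ - θ j)| + |ξ - θ i - round (ξ - θ i)| := by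
      refine (abs_sub _ _).trans_eq' (congrArg _ ?_)
      push_cast
      ring
    have := mul_le_mul_of_nonneg_left triangle (by positivity : (0 : ℝ) ≤ 2 ^ (4 * s))
    linarith
  rw [← sum_filter_ne_zero]
  refine (sum_le_card_nsmul _ _ 1 fun i _ ↦ ?_).trans (by simpa using disjoint)
  rw [sq_le_one_iff_abs_le_one]
  exact abs_etaPer_le_one hη h1 s _

end Cutoff

section Rset

variable {s : ℕ} {p p' : ℕ × ℕ}

lemma mem_Rset : p ∈ Rset s ↔ (1 ≤ p.1 ∧ p.1 ≤ p.2 ∧ p.1.Coprime p.2) ∧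
    (2 ^ s ≤ p.2 ∧ p.2 < 2 ^ (s + 1)) ∧ (Squarefree p.2 ∨ 4 ∣ p.2 ∧ Squarefree (p.2 / 4)) := by
  simp only [Rset, mem_filter, mem_product, mem_range]
  constructor
  · tauto
  · rintro ⟨⟨h1, h2, h3⟩, ⟨h4, h5⟩, h6⟩
    exact ⟨⟨h2.trans_lt h5, h5⟩, h4, h1, h2, h3, h6⟩

lemma denom_pos (hp : p ∈ Rset s) : 0 < p.2 :=
  (mem_Rset.1 hp).1.1.trans (mem_Rset.1 hp).1.2.1

lemma denom_mul_denom_le (hp : p ∈ Rset s) (hp' : p' ∈ Rset s) : p.2 * p'.2 ≤ 2 ^ (4 * s) := by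
  obtain ⟨-, ⟨-, hlt⟩, -⟩ := mem_Rset.1 hp
  obtain ⟨-, ⟨-, hlt'⟩, -⟩ := mem_Rset.1 hp'
  have hpos : 1 ≤ 2 ^ s := Nat.one_le_two_pow
  rw [pow_succ] at hlt hlt'
  calc p.2 * p'.2 ≤ (2 ^ s * 2 ^ s) * (2 ^ s * 2 ^ s) := by
        refine Nat.mul_le_mul ?_ ?_ <;> nlinarith
    _ = 2 ^ (4 * s) := by ring

lemma eq_of_sub_eq_intCast (hp : p ∈ Rset s) (hp' : p' ∈ Rset s) {k : ℤ}
    (h : (p.1 / p.2 : ℝ) - p'.1 / p'.2 = k) : p = p' := by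
  have mem_Ioc {r : ℕ × ℕ} (hr : r ∈ Rset s) : (r.1 / r.2 : ℝ) ∈ Set.Ioc 0 1 := by
    obtain ⟨⟨ha, haq, -⟩, -⟩ := mem_Rset.1 hr
    have hq : (0 : ℝ) < r.2 := mod_cast denom_pos hr
    exact ⟨div_pos (mod_cast ha) hq, (div_le_one hq).2 (mod_cast haq)⟩
  have abs_k_lt : |(k : ℝ)| < 1 := by
    rw [← h, abs_lt]
    constructor <;> linarith [(mem_Ioc hp).1, (mem_Ioc hp).2, (mem_Ioc hp').1, (mem_Ioc hp').2]
  have k_eq_zero : k = 0 := Int.abs_lt_one_iff.1 (mod_cast abs_k_lt)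
  rw [k_eq_zero, Int.cast_zero, sub_eq_zero] at h
  obtain ⟨h1, h2⟩ := Rat.div_int_inj (a := p.1) (b := p.2) (c := p'.1) (d := p'.2)
    (mod_cast denom_pos hp) (mod_cast denom_pos hp') (mem_Rset.1 hp).1.2.2 (mem_Rset.1 hp').1.2.2
    (Rat.cast_injective (α := ℝ) (by push_cast; exact h))
  exact Prod.ext (mod_cast h1) (mod_cast h2)

theorem eq_of_abs_sub_lt (hp : p ∈ Rset s) (hp' : p' ∈ Rset s) {k : ℤ}
    (h : 2 ^ (4 * s) * |(p.1 / p.2 : ℝ) - p'.1 / p'.2 - k| < 1) : p = p' := by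
  have hq := denom_pos hp
  have hq' := denom_pos hp'
  refine eq_of_sub_eq_intCast hp hp' (k := k) (sub_eq_zero.1 ?_)
  set d : ℝ := p.1 / p.2 - p'.1 / p'.2 - k with hd
  let n : ℤ := p.1 * p'.2 - p'.1 * p.2 - k * (p.2 * p'.2)
  have n_eq : (n : ℝ) = (p.2 * p'.2) * d := by
    simp only [n, hd]
    push_cast
    field_simp
  have n_lt : |n| < 1 := by
    have denom_le : (p.2 * p'.2 : ℝ) ≤ 2 ^ (4 * s) := mod_cast denom_mul_denom_le hp hp'
    have : |(n : ℝ)| < 1 := by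
      rw [n_eq, abs_mul, abs_of_nonneg (by positivity)]
      exact (mul_le_mul_of_nonneg_right denom_le (abs_nonneg d)).trans_lt h
    exact_mod_cast this
  rw [Int.abs_lt_one_iff.1 n_lt, Int.cast_zero] at n_eq
  exact (mul_eq_zero.1 n_eq.symm).resolve_left (by positivity)

/-- A common denominator of the fractions in `Rset s`. -/
def commonDenom (s : ℕ) : ℕ := 4 * primorial (2 ^ (s + 1))

lemma commonDenom_pos (s : ℕ) : 0 < commonDenom s :=
  Nat.mul_pos four_pos (primorial_pos _)

lemma denom_dvd_commonDenom (hp : p ∈ Rset s) : p.2 ∣ commonDenom s := by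
  obtain ⟨-, ⟨-, hlt⟩, hsq⟩ := mem_Rset.1 hp
  have dvd_of_squarefree {m : ℕ} (hm : Squarefree m) (hmq : m ≤ p.2) :
      m ∣ primorial (2 ^ (s + 1)) :=
    hm.dvd_primorial.trans (primorial_dvd_primorial (hmq.trans hlt.le))
  obtain hsq | ⟨h4, hsq⟩ := hsq
  · exact (dvd_of_squarefree hsq le_rfl).mul_left 4
  · rw [← Nat.mul_div_cancel' h4]
    exact mul_dvd_mul_left 4 (dvd_of_squarefree hsq (Nat.div_le_self _ _))

lemma commonDenom_le (s : ℕ) : commonDenom s ≤ 2 ^ 2 ^ (s + 4) := by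
  calc commonDenom s ≤ 4 * 4 ^ 2 ^ (s + 1) := Nat.mul_le_mul_left 4 (primorial_le_four_pow _)
    _ = 2 ^ (2 + 2 * 2 ^ (s + 1)) := by
      rw [pow_add 2 2, pow_mul 2 2]
      norm_num only
    _ ≤ 2 ^ 2 ^ (s + 4) := by
      refine Nat.pow_le_pow_right two_pos ?_
      have : 1 ≤ 2 ^ s := Nat.one_le_two_pow
      rw [pow_add, pow_add]
      lia

lemma norm_gaussG_sq_le_of_mem_Rset (hp : p ∈ Rset s) (χ : DirichletCharacter ℂ p.2) :
    ‖gaussG p.2 χ (p.1 : ℤ)‖ ^ 2 ≤ (s + 1) ^ 2 / 2 ^ s := by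
  obtain ⟨⟨-, -, hcop⟩, ⟨hle, hlt⟩, -⟩ := mem_Rset.1 hp
  have : NeZero p.2 := ⟨(denom_pos hp).ne'⟩
  have log_le : Nat.log 2 p.2 ≤ s := Nat.lt_succ_iff.1 (Nat.log_lt_of_lt_pow this.ne hlt)
  have unit : IsUnit (((p.1 : ℤ) : ZMod p.2)) := by
    rw [Int.cast_natCast]
    exact (ZMod.isUnit_iff_coprime _ _).2 hcop
  refine (norm_gaussG_sq_le χ unit).trans ?_
  have hle' : (2 : ℝ) ^ s ≤ p.2 := mod_cast hle
  gcongr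

end Rset

section MaximalBound

open MeasureTheory

variable {η : ℝ → ℝ} (hm : Measurable η) (h1 : ∀ ξ, |η ξ| ≤ 1)
  (hη : ∀ ξ : ℝ, 1 / 2 ≤ |ξ| → η ξ = 0) {f : ℤ → ℂ} (hf : Summable f)
include hm h1 hη hf

lemma memLp_etaPer_mul_fhat (s : ℕ) (θ : ℝ) :
    MemLp (fun ξ ↦ (etaPer η s (ξ - θ) : ℂ) * fhat f ξ) 2 (volume.restrict (Set.Ioc 0 1)) := by
  have meas : Measurable fun ξ ↦ (etaPer η s (ξ - θ) : ℂ) :=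
    Complex.measurable_ofReal.comp ((measurable_etaPer hη hm s).comp (measurable_sub_const θ))
  refine (memLp_fhat hf).of_le
    (meas.mul (continuous_fhat hf).measurable).aestronglyMeasurable (ae_of_all _ fun ξ ↦ ?_)
  rw [norm_mul, Complex.norm_real]
  exact mul_le_of_le_one_left (norm_nonneg _) (abs_etaPer_le_one hη h1 s _)

lemma sum_integral_norm_sq_etaPer_mul_fhat_le {s : ℕ} {S : Finset (ℕ × ℕ)} (hS : S ⊆ Rset s) :
    ∑ p ∈ S, ∫ ξ in (0 : ℝ)..1, ‖(etaPer η s (ξ - p.1 / p.2) : ℂ) * fhat f ξ‖ ^ 2 ≤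
      ∑' x, ‖f x‖ ^ 2 := by
  have integrable (p : ℕ × ℕ) := (intervalIntegrable_iff_integrableOn_Ioc_of_le zero_le_one).2
    ((memLp_etaPer_mul_fhat hm h1 hη hf s (p.1 / p.2)).integrable_norm_pow two_ne_zero)
  rw [← integral_norm_sq_fhat hf, ← intervalIntegral.integral_finsetSum fun p _ ↦ integrable p]
  refine intervalIntegral.integral_mono_on zero_le_one
    (by simpa only [sum_fn] using IntervalIntegrable.sum S fun p _ ↦ integrable p)
    ((continuous_fhat hf).norm.pow 2 |>.intervalIntegrable ..) fun ξ _ ↦ ?_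
  simp only [norm_mul, Complex.norm_real, mul_pow, Real.norm_eq_abs, sq_abs, ← sum_mul]
  exact mul_le_of_le_one_left (sq_nonneg _) <| sum_sq_etaPer_sub_le_one hη h1
    (fun p hp p' hp' _ ↦ eq_of_abs_sub_lt (hS hp) (hS hp')) ξ

theorem tsum_sq_iSup_le_of_subset_Rset {s : ℕ} {β : ℝ} (hβ : 0 < β) (hβ1 : β ≤ 1)
    (χ : (q : ℕ) → DirichletCharacter ℂ q) {S : Finset (ℕ × ℕ)} (hS : S ⊆ Rset s) :
    ∑' x : ℤ, (⨆ (n : ℕ) (_ : 2 ^ (s + 4) ≤ n),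
      ‖∑ p ∈ S, gaussG p.2 (χ p.2) (p.1 : ℤ) * FinvInt (fun ξ ↦ Mhat β (2 ^ n) (ξ - p.1 / p.2) *
        (etaPer η s (ξ - p.1 / p.2) : ℂ) * fhat f ξ) x‖) ^ 2 ≤
      16 * β⁻¹ ^ 2 * ((s + 1) ^ 2 / 2 ^ s) * ∑' x, ‖f x‖ ^ 2 := by
  refine tsum_sq_biSup_le (fun _ _ ↦ norm_nonneg _) fun σ F hσ ↦ ?_
  simp only [mul_assoc (Mhat _ _ _)]
  have scale_le (x : ℤ) : commonDenom s ≤ 2 ^ σ x :=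
    (commonDenom_le s).trans (Nat.pow_le_pow_right two_pos (hσ x))
  have commonDenom_mul (p) (hp : p ∈ S) : ∃ k : ℤ, commonDenom s * (p.1 / p.2 : ℝ) = k := by
    obtain ⟨m, hm⟩ := denom_dvd_commonDenom (hS hp)
    have : (p.2 : ℝ) ≠ 0 := Nat.cast_ne_zero.2 (denom_pos (hS hp)).ne'
    exact ⟨m * p.1, by rw [hm]; push_cast; field_simp⟩
  refine (sum_norm_sq_sum_FinvInt_Mhat_le hβ hβ1 (commonDenom_pos s) commonDenom_mul
    (fun p hp p' hp' ⟨k, hk⟩ ↦ eq_of_sub_eq_intCast (hS hp) (hS hp') hk)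
    (fun p _ ↦ memLp_etaPer_mul_fhat hm h1 hη hf s _) scale_le F).trans ?_
  rw [mul_assoc (16 * β⁻¹ ^ 2)]
  gcongr
  calc ∑ p ∈ S, ‖gaussG p.2 (χ p.2) p.1‖ ^ 2 *
        ∫ ξ in (0 : ℝ)..1, ‖(etaPer η s (ξ - p.1 / p.2) : ℂ) * fhat f ξ‖ ^ 2
      ≤ ∑ p ∈ S, (s + 1) ^ 2 / 2 ^ s *
        ∫ ξ in (0 : ℝ)..1, ‖(etaPer η s (ξ - p.1 / p.2) : ℂ) * fhat f ξ‖ ^ 2 := by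
        gcongr with p hp
        · exact intervalIntegral.integral_nonneg zero_le_one fun _ _ ↦ sq_nonneg _
        · exact norm_gaussG_sq_le_of_mem_Rset (hS hp) _
    _ ≤ (s + 1) ^ 2 / 2 ^ s * ∑' x, ‖f x‖ ^ 2 := by
        rw [← mul_sum]
        gcongr
        exact sum_integral_norm_sq_etaPer_mul_fhat_le hm h1 hη hf hS

end MaximalBound

lemma natCast_add_one_le_mul_two_rpow {ε : ℝ} (hε : 0 < ε) (s : ℕ) :
    (s + 1 : ℝ) ≤ (1 + 1 / (ε * Real.log 2)) * 2 ^ (s * ε) := by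
  have exp_eq : (2 : ℝ) ^ (s * ε) = Real.exp (s * (ε * Real.log 2)) := by
    rw [Real.rpow_def_of_pos two_pos]
    ring_nf
  have := Real.add_one_le_exp (s * (ε * Real.log 2))
  rw [← exp_eq] at this
  have pos : 0 ≤ s * (ε * Real.log 2) := by positivity
  calc (s + 1 : ℝ) = 1 + 1 / (ε * Real.log 2) * (s * (ε * Real.log 2)) := by field_simp; ring
    _ ≤ 2 ^ (s * ε) + 1 / (ε * Real.log 2) * 2 ^ (s * ε) := by gcongr <;> linarith
    _ = _ := by ring

theorem stmt_14_general {ε β₀ : ℝ} (hε : 0 < ε) (hβ₀ : 0 < β₀) :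
    ∃ C : ℝ, 0 < C ∧ ∀ η : ℝ → ℝ, Measurable η → (∀ ξ, |η ξ| ≤ 1) →
      (∀ ξ : ℝ, 1 / 2 ≤ |ξ| → η ξ = 0) → ∀ (s : ℕ) (β : ℝ), β₀ ≤ β → β ≤ 1 →
        ∀ (χ : (q : ℕ) → DirichletCharacter ℂ q) (S : Finset (ℕ × ℕ)), S ⊆ Rset s →
          ∀ f : ℤ → ℂ, Summable f →
            √(∑' x : ℤ, (⨆ (n : ℕ) (_ : 2 ^ (s + 4) ≤ n),
              ‖∑ p ∈ S, gaussG p.2 (χ p.2) (p.1 : ℤ) *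
                FinvInt (fun ξ ↦ Mhat β (2 ^ n) (ξ - p.1 / p.2) *
                  (etaPer η s (ξ - p.1 / p.2) : ℂ) * fhat f ξ) x‖) ^ 2) ≤
            C * 2 ^ (-(s : ℝ) * (1 / 2 - ε)) * √(∑' x : ℤ, ‖f x‖ ^ 2) := by
  refine ⟨4 * β₀⁻¹ * (1 + 1 / (ε * Real.log 2)), by positivity, ?_⟩
  intro η hm h1 hη s β hβ hβ1 χ S hS f hf
  have hβ0 : 0 < β := hβ₀.trans_le hβ
  have constant_le : √(16 * β⁻¹ ^ 2 * ((s + 1) ^ 2 / 2 ^ s)) ≤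
      4 * β₀⁻¹ * (1 + 1 / (ε * Real.log 2)) * 2 ^ (-(s : ℝ) * (1 / 2 - ε)) := by
    refine Real.sqrt_le_iff.2 ⟨by positivity, ?_⟩
    have split : ((2 : ℝ) ^ (-(s : ℝ) * (1 / 2 - ε))) ^ 2 = (2 ^ (s * ε)) ^ 2 / 2 ^ s := by
      rw [← Real.rpow_mul_natCast zero_le_two, ← Real.rpow_mul_natCast zero_le_two,
        ← Real.rpow_natCast 2 s, ← Real.rpow_sub two_pos]
      congr 1
      push_cast
      ring
    calc 16 * β⁻¹ ^ 2 * ((s + 1) ^ 2 / 2 ^ s)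
        ≤ 16 * β₀⁻¹ ^ 2 * (((1 + 1 / (ε * Real.log 2)) * 2 ^ (s * ε)) ^ 2 / 2 ^ s) := by
          gcongr
          exact natCast_add_one_le_mul_two_rpow hε s
      _ = _ := by rw [mul_pow _ ((2 : ℝ) ^ (-(s : ℝ) * (1 / 2 - ε))), split]; ring
  refine (Real.sqrt_le_sqrt (tsum_sq_iSup_le_of_subset_Rset hm h1 hη hf hβ0 hβ1 χ hS)).trans ?_
  rw [Real.sqrt_mul (by positivity)]
  gcongr

/-- `ℓ²` bound for the maximal function, over `n ≥ 2^{s+4}`, of the multipliers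
`Σ_{a/q ∈ S} G(χ_q, a) M̂_{2^n}^β(· − a/q) η_s(· − a/q)` for any `S ⊆ 𝓡_s`. -/
theorem stmt_14 (ε : ℝ) (hε : 0 < ε) (η : ℝ → ℝ) (hη : IsEta η) :
    ∃ C : ℝ, 0 < C ∧
      ∀ (s : ℕ), 1 ≤ s →
        ∀ (β : ℝ), 1 / 2 ≤ β → β ≤ 1 →
          ∀ (χ : (q : ℕ) → DirichletCharacter ℂ q),
            (∀ q, 2 ^ s ≤ q → q < 2 ^ (s + 1) →
              (∀ m : ZMod q, χ q m = -1 ∨ χ q m = 0 ∨ χ q m = 1) ∧ ∃ m : ZMod q, χ q m = -1) →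
            ∀ (S : Finset (ℕ × ℕ)), S ⊆ Rset s →
              ∀ (f : ℤ → ℂ), (Function.support f).Finite →
                Real.sqrt (∑' x : ℤ,
                    (⨆ (n : ℕ) (_ : 2 ^ (s + 4) ≤ n),
                      ‖∑ p ∈ S, gaussG p.2 (χ p.2) (p.1 : ℤ) *
                        FinvInt (fun ξ =>
                          Mhat β (2 ^ n) (ξ - (p.1 : ℝ) / p.2) *
                            (etaPer η s (ξ - (p.1 : ℝ) / p.2) : ℂ) * fhat f ξ) x‖) ^ 2) ≤
                  C * (2 : ℝ) ^ (-(s : ℝ) * (1 / 2 - ε)) *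
                    Real.sqrt (∑' x : ℤ, ‖f x‖ ^ 2) := by
  obtain ⟨C, hC, bound⟩ := stmt_14_general hε (β₀ := 1 / 2) one_half_pos
  have abs_η_le (ξ : ℝ) : |η ξ| ≤ 1 := (abs_of_nonneg (hη.2.1 ξ).1).trans_le (hη.2.1 ξ).2
  exact ⟨C, hC, fun s _ β hβ hβ1 χ _ S hS f hf ↦ bound η hη.1.continuous.measurable abs_η_le
    hη.2.2.2.1 s β hβ hβ1 χ S hS f (summable_of_hasFiniteSupport hf)⟩
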